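/- If a mixed state ρ on a bipartite Hilbert space of dimension d₁×d₂ satisfies tr(ρ²) ≤ 1/(d₁d₂ − 1), then ρ is separable. -/

import Mathlib

open Matrix Kronecker
open scoped BigOperators ComplexOrder

/-- A density matrix: positive semidefinite with unit trace. -/
def IsDensity {m : Type*} [Fintype m] [DecidableEq m] (ρ : Matrix m m ℂ) : Prop :=
  ρ.PosSemidef ∧ ρ.trace = 1

/-- A separable bipartite state: a finite convex combination of
pure product states `|a⟩⟨a| ⊗ |b⟩⟨b|` with unit vectors `a, b`. -/
def SeparableState {d₁ d₂ : ℕ}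
    (ρ : Matrix (Fin d₁ × Fin d₂) (Fin d₁ × Fin d₂) ℂ) : Prop :=
  ∃ (n : ℕ) (p : Fin n → ℝ) (a : Fin n → (Fin d₁ → ℂ)) (b : Fin n → (Fin d₂ → ℂ)),
    (∀ i, 0 ≤ p i) ∧ (∑ i, p i) = 1 ∧
    (∀ i, ∑ x, ‖a i x‖ ^ 2 = 1) ∧ (∀ i, ∑ x, ‖b i x‖ ^ 2 = 1) ∧
    ρ = ∑ i, (p i : ℂ) •
      (Matrix.vecMulVec (a i) (star (a i)) ⊗ₖ Matrix.vecMulVec (b i) (star (b i)))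

section Basis

variable {E : Type*} [NormedAddCommGroup E] [InnerProductSpace ℂ E] [FiniteDimensional ℂ E]

open Module in
/-- Finite-dimensional spectral theorem for unitary operators, via the Cayley transform. -/
lemma LinearIsometryEquiv.exists_eigenbasis {n : ℕ} (hn : finrank ℂ E = n) (U : E ≃ₗᵢ[ℂ] E) :
    ∃ (y : OrthonormalBasis (Fin n) ℂ E) (μ : Fin n → ℂ), ∀ k, U (y k) = μ k • y k := by
  let T : End ℂ E := U.toLinearEquiv.toLinearMap
  have hinf : (Metric.sphere (0 : ℂ) 1).Infinite :=
    (isPreconnected_sphere (by simp [Complex.rank_real_complex]) 0 1).infinite_of_nontrivial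
      ⟨1, by simp, -1, by simp, by norm_num⟩
  obtain ⟨w, hw1, hw⟩ := (hinf.sdiff T.finite_hasEigenvalue).nonempty
  have hw1 : ‖w‖ = 1 := by simpa using hw1
  have hww : star w * w = 1 := by
    have := Complex.conj_mul' w
    simpa [hw1] using this
  have hinj : Function.Injective (w • LinearMap.id - T : E →ₗ[ℂ] E) := by
    rw [injective_iff_map_eq_zero]
    intro x hx
    by_contra hx0
    refine hw (End.hasEigenvalue_of_hasEigenvector (x := x) ⟨?_, hx0⟩)
    rw [End.mem_eigenspace_iff]
    exact (sub_eq_zero.1 hx).symm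
  let e : E ≃ₗ[ℂ] E := LinearEquiv.ofInjectiveEndo _ hinj
  have he : ∀ p, e p = w • p - U p := fun p => rfl
  let H : E →ₗ[ℂ] E := (Complex.I • (w • LinearMap.id + T)) ∘ₗ e.symm.toLinearMap
  have hHe : ∀ p, H (e p) = Complex.I • (w • p + U p) := fun p => by simp [H, T]
  have hH : H.IsSymmetric := by
    intro x y
    obtain ⟨p, rfl⟩ := e.surjective x
    obtain ⟨q, rfl⟩ := e.surjective y
    rw [hHe, hHe, he, he]
    simp only [inner_smul_left, inner_smul_right, inner_add_left, inner_add_right,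
      inner_sub_left, inner_sub_right, U.inner_map_map, Complex.conj_I]
    rw [Complex.star_def] at hww
    linear_combination (-2 * Complex.I * inner ℂ p q) * hww
  refine ⟨hH.eigenvectorBasis hn, ?_⟩
  suffices h : ∀ k, ∃ μ : ℂ, U (hH.eigenvectorBasis hn k) = μ • hH.eigenvectorBasis hn k from
    ⟨fun k => (h k).choose, fun k => (h k).choose_spec⟩
  intro k
  have hk := hH.apply_eigenvectorBasis hn k
  generalize hH.eigenvectorBasis hn k = y at hk
  generalize hH.eigenvalues hn k = l at hk
  obtain ⟨p, rfl⟩ := e.surjective y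
  rw [hHe, he] at hk
  have hl : (l : ℂ) + Complex.I ≠ 0 := fun h => by simpa using congrArg Complex.im h
  have hU : U p = (((l : ℂ) + Complex.I)⁻¹ * (l - Complex.I) * w) • p := by
    rw [mul_assoc, mul_smul, eq_inv_smul_iff₀ hl]
    linear_combination (norm := module) hk
  refine ⟨((l : ℂ) + Complex.I)⁻¹ * (l - Complex.I) * w, ?_⟩
  have hUU : U (U p) = (((l : ℂ) + Complex.I)⁻¹ * (l - Complex.I) * w) • U p := by
    conv_lhs => rw [hU, map_smul]
  rw [he, map_sub, hUU, map_smul, smul_sub, smul_comm _ w p, ← hU]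

open Module in
lemma LinearMap.exists_orthonormalBasis_map_eq {n : ℕ} (hn : finrank ℂ E = n) (C : E →ₗ[ℂ] E) :
    ∃ b f : OrthonormalBasis (Fin n) ℂ E, ∀ i, C (f i) = (‖C (f i)‖ : ℂ) • b i := by
  have hS : (C.adjoint ∘ₗ C).IsSymmetric := C.isSymmetric_adjoint_comp_self
  let f := hS.eigenvectorBasis hn
  have horth : ∀ i j, i ≠ j → inner ℂ (C (f i)) (C (f j)) = 0 := by
    intro i j hij
    have := hS.apply_eigenvectorBasis hn j
    rw [← LinearMap.adjoint_inner_right, ← LinearMap.comp_apply, this, inner_smul_right]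
    simp [f, hij]
  let v : Fin n → E := fun i => ((‖C (f i)‖ : ℂ)⁻¹) • C (f i)
  have hv : Orthonormal ℂ (Set.domRestrict {i | C (f i) ≠ 0} v) := by
    constructor
    · rintro ⟨i, hi⟩
      have hi : C (f i) ≠ 0 := hi
      simp [v, norm_smul, hi]
    · rintro ⟨i, hi⟩ ⟨j, hj⟩ hij
      have : i ≠ j := fun h => hij (Subtype.ext h)
      simp [v, inner_smul_left, inner_smul_right, horth i j this]
  obtain ⟨b, hb⟩ := hv.exists_orthonormalBasis_extension_of_card_eq (by simpa using hn)
  refine ⟨b, f, fun i => ?_⟩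
  by_cases hi : C (f i) = 0
  · simp [hi]
  · have : (‖C (f i)‖ : ℂ) ≠ 0 := by simpa using hi
    rw [hb i hi, smul_inv_smul₀ this]

lemma LinearMap.sum_norm_sq_map_orthonormalBasis {ι κ : Type*} [Fintype ι] [Fintype κ]
    (C : E →ₗ[ℂ] E) (b : OrthonormalBasis ι ℂ E) (c : OrthonormalBasis κ ℂ E) :
    ∑ i, ‖C (b i)‖ ^ 2 = ∑ i, ‖C (c i)‖ ^ 2 := by
  have hb := LinearMap.trace_eq_sum_inner (C.adjoint ∘ₗ C) b
  rw [LinearMap.trace_eq_sum_inner _ c] at hb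
  simp only [LinearMap.comp_apply, LinearMap.adjoint_inner_right, inner_self_eq_norm_sq_to_K] at hb
  exact_mod_cast hb.symm

open Module in
/-- The Hilbert–Schmidt norm of an operator is at most the `ℓ¹` norm of its diagonal in a suitable
orthonormal basis. -/
lemma LinearMap.exists_orthonormalBasis_sum_norm_sq_le {ι : Type*} [Fintype ι]
    (C : E →ₗ[ℂ] E) (c : OrthonormalBasis ι ℂ E) :
    ∃ y : OrthonormalBasis (Fin (finrank ℂ E)) ℂ E,
      ∑ i, ‖C (c i)‖ ^ 2 ≤ (∑ k, ‖inner ℂ (y k) (C (y k))‖) ^ 2 := by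
  obtain ⟨b, f, hbf⟩ := C.exists_orthonormalBasis_map_eq rfl
  let U : E ≃ₗᵢ[ℂ] E := b.equiv f (Equiv.refl _)
  obtain ⟨y, μ, hy⟩ := U.exists_eigenbasis rfl
  have hμ : ∀ k, ‖μ k‖ = 1 := fun k => by
    have := congrArg norm (hy k)
    simpa [norm_smul] using this.symm
  refine ⟨y, ?_⟩
  have htr : ∑ i, (‖C (f i)‖ : ℂ) = ∑ k, μ k * inner ℂ (y k) (C (y k)) := by
    have h1 := LinearMap.trace_eq_sum_inner (C ∘ₗ U.toLinearEquiv.toLinearMap) b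
    have h2 := LinearMap.trace_eq_sum_inner (C ∘ₗ U.toLinearEquiv.toLinearMap) y
    rw [h1] at h2
    convert h2 using 2 with i _ k _
    · have : U (b i) = f i := by simp [U]
      simp only [LinearMap.comp_apply, LinearEquiv.coe_coe, LinearIsometryEquiv.coe_toLinearEquiv,
        this]
      rw [hbf, inner_smul_right]
      simp [norm_smul]
    · simp [hy, inner_smul_right]
  rw [C.sum_norm_sq_map_orthonormalBasis c f]
  refine (Finset.sum_sq_le_sq_sum_of_nonneg fun i _ => norm_nonneg _).trans ?_
  refine pow_le_pow_left₀ (by positivity) ?_ 2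
  have h3 : ‖∑ i, (‖C (f i)‖ : ℂ)‖ = ∑ i, ‖C (f i)‖ := by
    rw [← Complex.ofReal_sum, Complex.norm_real, Real.norm_of_nonneg (by positivity)]
  rw [← h3, htr]
  refine (norm_sum_le _ _).trans_eq ?_
  simp [hμ]

end Basis

open Module in
/-- In finite dimension the convex hull of a compact set is compact. -/
lemma IsCompact.convexHull_of_finiteDimensional {V : Type*} [NormedAddCommGroup V]
    [NormedSpace ℝ V] [FiniteDimensional ℝ V] {S : Set V} (hS : IsCompact S) :
    IsCompact (convexHull ℝ S) := by
  let φ : (k : ℕ) → (Fin k → ℝ) × (Fin k → V) → V := fun k q => ∑ i, q.1 i • q.2 i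
  have h : convexHull ℝ S = ⋃ k ∈ Finset.range (finrank ℝ V + 2),
      φ k '' (stdSimplex ℝ (Fin k) ×ˢ Set.univ.pi fun _ => S) := by
    apply Set.Subset.antisymm
    · intro x hx
      obtain ⟨ι, _, z, w, hz, hind, hw, hw1, rfl⟩ := eq_pos_convex_span_of_mem_convexHull hx
      have hcard : Fintype.card ι ≤ finrank ℝ V + 1 :=
        hind.card_le_finrank_succ.trans (by gcongr; exact Submodule.finrank_le _)
      simp only [Set.mem_iUnion]
      let e := (Fintype.equivFin ι).symm
      refine ⟨Fintype.card ι, by simpa using by omega, (w ∘ e, z ∘ e), ⟨⟨?_, ?_⟩, ?_⟩, ?_⟩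
      · exact fun i => (hw _).le
      · simpa [e.sum_comp w] using hw1
      · exact fun i _ => hz ⟨_, rfl⟩
      · exact e.sum_comp fun i => w i • z i
    · simp only [Set.iUnion_subset_iff]
      rintro k - _ ⟨⟨w, z⟩, ⟨⟨hw, hw1⟩, hz⟩, rfl⟩
      exact mem_convexHull_of_exists_fintype w z hw hw1 (fun i => hz i trivial) rfl
  rw [h]
  refine Finset.isCompact_biUnion _ fun k _ => ?_
  exact ((isCompact_stdSimplex ℝ (Fin k)).prod (isCompact_univ_pi fun _ => hS)).image (by fun_prop)

lemma isCompact_setOf_sum_norm_sq_eq_one (n : Type*) [Fintype n] :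
    IsCompact {a : n → ℂ | ∑ x, ‖a x‖ ^ 2 = 1} := by
  refine Metric.isCompact_of_isClosed_isBounded
    (isClosed_eq (by fun_prop) continuous_const) ((Metric.isBounded_closedBall (x := 0) (r := 1)).subset
      fun a ha => ?_)
  rw [mem_closedBall_zero_iff, pi_norm_le_iff_of_nonneg zero_le_one]
  intro x
  have : ‖a x‖ ^ 2 ≤ 1 := ha ▸ Finset.single_le_sum (f := fun x => ‖a x‖ ^ 2)
    (fun _ _ => by positivity) (Finset.mem_univ x)
  exact (sq_le_one_iff₀ (norm_nonneg _)).1 this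

/-- The density matrix of a pure product state, as a plain function of two indices. -/
def pureProduct {m n : Type*} (a : m → ℂ) (b : n → ℂ) : m × n → m × n → ℂ :=
  fun p q => a p.1 * star (a q.1) * (b p.2 * star (b q.2))

/-- The set of pure product states. -/
def pureProductStates (m n : Type*) [Fintype m] [Fintype n] : Set (m × n → m × n → ℂ) :=
  (fun v : (m → ℂ) × (n → ℂ) => pureProduct v.1 v.2) ''
    ({a : m → ℂ | ∑ x, ‖a x‖ ^ 2 = 1} ×ˢ {b : n → ℂ | ∑ x, ‖b x‖ ^ 2 = 1})

lemma isCompact_pureProductStates (m n : Type*) [Fintype m] [Fintype n] :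
    IsCompact (pureProductStates m n) := by
  refine ((isCompact_setOf_sum_norm_sq_eq_one m).prod
    (isCompact_setOf_sum_norm_sq_eq_one n)).image ?_
  unfold pureProduct
  fun_prop

/-- A real linear functional, evaluated on Hermitian matrices, is given by pairing with a
Hermitian matrix. -/
lemma exists_hermitian_pairing {m : Type*} [Fintype m] [DecidableEq m]
    (f : (m → m → ℂ) →ₗ[ℝ] ℝ) :
    ∃ F : m → m → ℂ, (∀ p q, F q p = star (F p q)) ∧
      ∀ X : m → m → ℂ, (∀ p q, X q p = star (X p q)) → f X = (∑ p, ∑ q, F p q * X p q).re := by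
  let g : Module.Dual ℂ (m → m → ℂ) := Module.Dual.extendRCLike (𝕜 := ℂ) f
  let G : m → m → ℂ := fun p q => g (Pi.single p (Pi.single q 1))
  have hg : ∀ X, g X = ∑ p, ∑ q, G p q * X p q := by
    intro X
    conv_lhs => rw [← Finset.univ_sum_single X]
    rw [map_sum]
    refine Finset.sum_congr rfl fun p _ => ?_
    conv_lhs => rw [← Finset.univ_sum_single (X p)]
    have := map_sum (g ∘ₗ LinearMap.single ℂ (fun _ : m => m → ℂ) p)
      (fun q => Pi.single q (X p q)) Finset.univ
    simp only [LinearMap.comp_apply, LinearMap.coe_single] at this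
    rw [this]
    refine Finset.sum_congr rfl fun q _ => ?_
    rw [mul_comm, ← smul_eq_mul, ← map_smul, ← Pi.single_smul, ← Pi.single_smul, smul_eq_mul,
      mul_one]
  refine ⟨fun p q => (G p q + star (G q p)) / 2, fun p q => by simp [add_comm], fun X hX => ?_⟩
  have h1 : f X = (g X).re := (Module.Dual.re_extendRCLike_apply (𝕜 := ℂ) f X).symm
  have h2 : (∑ p, ∑ q, star (G q p) * X p q) = star (g X) := by
    rw [hg, Finset.sum_comm, star_sum]
    refine Finset.sum_congr rfl fun p _ => ?_
    rw [star_sum]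
    exact Finset.sum_congr rfl fun q _ => by rw [hX p q, star_mul']
  have h3 : (∑ p, ∑ q, (G p q + star (G q p)) / 2 * X p q) = (g X + star (g X)) / 2 := by
    rw [← h2, hg, ← Finset.sum_add_distrib, Finset.sum_div]
    refine Finset.sum_congr rfl fun p _ => ?_
    rw [← Finset.sum_add_distrib, Finset.sum_div]
    exact Finset.sum_congr rfl fun q _ => by ring
  rw [h3, h1]
  simp

/-- The form `⟨x ⊗ y, W (x ⊗ y)⟩`, written in coordinates as a pairing with a product matrix. -/
def IsBlockPositive {m n : Type*} [Fintype m] [Fintype n] (W : m × n → m × n → ℂ) : Prop :=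
  ∀ (x : m → ℂ) (y : n → ℂ), 0 ≤ (∑ p, ∑ q, W p q * pureProduct x y p q).re

section BlockPositive

variable {m n : Type*} [Fintype m] [Fintype n] {W : m × n → m × n → ℂ}

/-- The `(i, j)` block of `W`, as an operator on the second factor. -/
noncomputable def block [DecidableEq n] (W : m × n → m × n → ℂ) (i j : m) :
    EuclideanSpace ℂ n →ₗ[ℂ] EuclideanSpace ℂ n :=
  Matrix.toEuclideanLin (Matrix.of fun b a => W (i, a) (j, b))

omit [Fintype m] in
lemma inner_block [DecidableEq n] (i j : m) (y : EuclideanSpace ℂ n) :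
    inner ℂ y (block W i j y) = ∑ a, ∑ b, W (i, a) (j, b) * (y a * star (y b)) := by
  rw [Finset.sum_comm]
  simp only [block, PiLp.inner_apply, Matrix.toLpLin_apply, Matrix.mulVec, dotProduct,
    Matrix.of_apply, RCLike.inner_apply, Finset.sum_mul]
  refine Finset.sum_congr rfl fun b _ => Finset.sum_congr rfl fun a _ => ?_
  simp only [starRingEnd_apply]
  ring

lemma posSemidef_inner_block [DecidableEq n] (hW : ∀ p q, W q p = star (W p q))
    (hpos : IsBlockPositive W) (y : EuclideanSpace ℂ n) :
    (Matrix.of fun i j => inner ℂ y (block W i j y)).PosSemidef := by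
  have hH : (Matrix.of fun i j => inner ℂ y (block W i j y)).IsHermitian := by
    ext i j
    simp only [conjTranspose_apply, of_apply, inner_block, star_sum, star_mul', star_star]
    rw [Finset.sum_comm]
    refine Finset.sum_congr rfl fun b _ => Finset.sum_congr rfl fun a _ => ?_
    rw [hW, star_star]
    ring
  refine Matrix.PosSemidef.of_dotProduct_mulVec_nonneg hH fun x => ?_
  rw [Complex.nonneg_iff]
  refine ⟨?_, ?_⟩
  · convert hpos (star x) y using 2
    simp only [dotProduct, mulVec, of_apply, inner_block, Finset.mul_sum, Finset.sum_mul,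
      Fintype.sum_prod_type, pureProduct, Pi.star_apply, star_star]
    refine Finset.sum_congr rfl fun i _ => ?_
    rw [Finset.sum_comm]
    refine Finset.sum_congr rfl fun j _ => Finset.sum_congr rfl fun a _ =>
      Finset.sum_congr rfl fun b _ => ?_
    ring
  · exact (hH.im_star_dotProduct_mulVec_self x).symm

lemma norm_inner_block_sq_le [DecidableEq n] (hW : ∀ p q, W q p = star (W p q))
    (hpos : IsBlockPositive W) (y : EuclideanSpace ℂ n) (i j : m) :
    ‖inner ℂ y (block W i j y)‖ ^ 2 ≤
      (inner ℂ y (block W i i y)).re * (inner ℂ y (block W j j y)).re := by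
  have h := posSemidef_inner_block hW hpos y
  have hd := (h.submatrix ![i, j]).det_nonneg
  have hij := h.isHermitian.apply i j
  have hi := h.isHermitian.apply i i
  have hj := h.isHermitian.apply j j
  simp only [Matrix.det_fin_two, submatrix_apply, of_apply, Matrix.cons_val_zero,
    Matrix.cons_val_one] at hd hij hi hj
  rw [← hij] at hd
  have := (Complex.nonneg_iff.1 hd).1
  have hi := congrArg Complex.im hi
  have hj := congrArg Complex.im hj
  rw [← hij, norm_star, ← Complex.normSq_eq_norm_sq, Complex.normSq_apply]
  simp only [Complex.sub_re, Complex.mul_re, Complex.star_def, Complex.conj_re,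
    Complex.conj_im] at this hi hj
  have hi0 : (inner ℂ y (block W i i y)).im = 0 := by linarith
  rw [hi0] at this
  linarith

lemma re_inner_block_nonneg [DecidableEq n] (hW : ∀ p q, W q p = star (W p q))
    (hpos : IsBlockPositive W) (y : EuclideanSpace ℂ n) (i : m) :
    0 ≤ (inner ℂ y (block W i i y)).re :=
  (Complex.nonneg_iff.1 ((posSemidef_inner_block hW hpos y).diag_nonneg (i := i))).1

omit [Fintype m] in
lemma sum_re_inner_block [DecidableEq n] {ι : Type*} [Fintype ι]
    (b : OrthonormalBasis ι ℂ (EuclideanSpace ℂ n)) (i : m) :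
    ∑ k, (inner ℂ (b k) (block W i i (b k))).re = ∑ a, (W (i, a) (i, a)).re := by
  rw [← Complex.re_sum, ← LinearMap.trace_eq_sum_inner,
    LinearMap.trace_eq_sum_inner _ (EuclideanSpace.basisFun n ℂ), Complex.re_sum]
  refine Finset.sum_congr rfl fun a _ => ?_
  simp [inner_block]

lemma sum_norm_sq_block_le [DecidableEq n] (hW : ∀ p q, W q p = star (W p q))
    (hpos : IsBlockPositive W) (i j : m) :
    ∑ a, ∑ b, ‖W (i, a) (j, b)‖ ^ 2 ≤
      (∑ a, (W (i, a) (i, a)).re) * ∑ a, (W (j, a) (j, a)).re := by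
  obtain ⟨y, hy⟩ := (block W i j).exists_orthonormalBasis_sum_norm_sq_le
    (EuclideanSpace.basisFun n ℂ)
  have h1 : ∑ a, ‖block W i j (EuclideanSpace.basisFun n ℂ a)‖ ^ 2 =
      ∑ a, ∑ b, ‖W (i, a) (j, b)‖ ^ 2 := by
    simp [block, EuclideanSpace.norm_sq_eq]
  rw [← h1]
  refine hy.trans ?_
  rw [← sum_re_inner_block y i, ← sum_re_inner_block y j]
  refine Finset.sum_sq_le_sum_mul_sum_of_sq_le_mul _ (fun k _ => ?_) (fun k _ => ?_) fun k _ => ?_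
  · exact re_inner_block_nonneg hW hpos _ _
  · exact re_inner_block_nonneg hW hpos _ _
  · exact norm_inner_block_sq_le hW hpos _ _ _

/-- A block-positive operator has nonnegative trace. -/
lemma sum_re_diag_nonneg_of_isBlockPositive (hW : ∀ p q, W q p = star (W p q))
    (hpos : IsBlockPositive W) : 0 ≤ ∑ p, (W p p).re := by
  classical
  rw [Fintype.sum_prod_type]
  refine Finset.sum_nonneg fun i _ => ?_
  rw [← sum_re_inner_block (EuclideanSpace.basisFun n ℂ)]
  exact Finset.sum_nonneg fun k _ => re_inner_block_nonneg hW hpos _ _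

/-- The Hilbert–Schmidt norm of a block-positive operator is at most its trace. -/
lemma sum_norm_sq_le_of_isBlockPositive (hW : ∀ p q, W q p = star (W p q))
    (hpos : IsBlockPositive W) :
    ∑ p, ∑ q, ‖W p q‖ ^ 2 ≤ (∑ p, (W p p).re) ^ 2 := by
  classical
  simp only [Fintype.sum_prod_type]
  rw [sq, Finset.sum_mul_sum]
  refine Finset.sum_le_sum fun i _ => ?_
  rw [Finset.sum_comm]
  exact Finset.sum_le_sum fun j _ => sum_norm_sq_block_le hW hpos i j

end BlockPositive

section Pairing

variable {m n : Type*} [Fintype m] [Fintype n]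

omit [Fintype m] [Fintype n] in
lemma star_pureProduct (a : m → ℂ) (b : n → ℂ) (p q : m × n) :
    pureProduct a b q p = star (pureProduct a b p q) := by
  simp only [pureProduct, star_mul', star_star]
  ring

omit [Fintype m] [Fintype n] in
lemma smul_pureProduct (s t : ℝ) (a : m → ℂ) (b : n → ℂ) (p q : m × n) :
    pureProduct (s • a) (t • b) p q = (s ^ 2 * t ^ 2 : ℝ) * pureProduct a b p q := by
  simp [pureProduct]
  ring

lemma sum_mul_star_eq_one {a : m → ℂ} (ha : ∑ x, ‖a x‖ ^ 2 = 1) :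
    ∑ x, a x * star (a x) = 1 := by
  simp only [Complex.star_def, Complex.mul_conj']
  exact_mod_cast ha

lemma sum_pureProduct_diag {a : m → ℂ} {b : n → ℂ} (ha : ∑ x, ‖a x‖ ^ 2 = 1)
    (hb : ∑ x, ‖b x‖ ^ 2 = 1) : ∑ p, pureProduct a b p p = 1 := by
  simp only [pureProduct, Fintype.sum_prod_type]
  rw [← Finset.sum_mul_sum, sum_mul_star_eq_one ha, sum_mul_star_eq_one hb, one_mul]

lemma exists_pos_smul_sum_norm_sq_eq_one {a : m → ℂ} (ha : a ≠ 0) :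
    ∃ s : ℝ, 0 < s ∧ ∑ x, ‖(s • a) x‖ ^ 2 = 1 := by
  have hpos : 0 < ∑ x, ‖a x‖ ^ 2 := by
    obtain ⟨x, hx⟩ := Function.ne_iff.1 ha
    exact Finset.sum_pos' (fun _ _ => by positivity)
      ⟨x, Finset.mem_univ _, by have := norm_pos_iff.2 hx; positivity⟩
  refine ⟨(Real.sqrt (∑ x, ‖a x‖ ^ 2))⁻¹, by positivity, ?_⟩
  simp only [Pi.smul_apply, norm_smul, mul_pow, ← Finset.mul_sum, Real.norm_eq_abs, sq_abs,
    inv_pow, Real.sq_sqrt hpos.le]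
  exact inv_mul_cancel₀ hpos.ne'

/-- Block positivity only needs to be checked on unit vectors. -/
lemma isBlockPositive_of_unit {W : m × n → m × n → ℂ}
    (h : ∀ (x : m → ℂ) (y : n → ℂ), ∑ i, ‖x i‖ ^ 2 = 1 → ∑ i, ‖y i‖ ^ 2 = 1 →
      0 ≤ (∑ p, ∑ q, W p q * pureProduct x y p q).re) : IsBlockPositive W := by
  intro x y
  by_cases hx : x = 0
  · simp [hx, pureProduct]
  by_cases hy : y = 0
  · simp [hy, pureProduct]
  obtain ⟨s, hs, hsx⟩ := exists_pos_smul_sum_norm_sq_eq_one hx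
  obtain ⟨t, ht, hty⟩ := exists_pos_smul_sum_norm_sq_eq_one hy
  have key := h _ _ hsx hty
  simp only [smul_pureProduct, mul_left_comm (W _ _), ← Finset.mul_sum, Complex.re_ofReal_mul]
    at key
  exact nonneg_of_mul_nonneg_right key (by positivity)

lemma sum_norm_sq_eq_re_trace_sq {k : Type*} [Fintype k] {ρ : Matrix k k ℂ}
    (hρ : ρ.IsHermitian) : ∑ p, ∑ q, ‖ρ p q‖ ^ 2 = (ρ * ρ).trace.re := by
  simp only [Matrix.trace, Matrix.diag_apply, Matrix.mul_apply, Complex.re_sum]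
  refine Finset.sum_congr rfl fun p _ => Finset.sum_congr rfl fun q _ => ?_
  rw [← hρ.apply q p, Complex.star_def, Complex.mul_conj']
  norm_cast

/-- If `t = tr W` is nonnegative and bounds the Hilbert–Schmidt norm of `W`, then `W` pairs
nonnegatively with every state of purity at most `1 / (d - 1)`. -/
lemma re_sum_mul_nonneg_of_purity {k : Type*} [Fintype k] [DecidableEq k] {ρ : Matrix k k ℂ}
    (hρ : IsDensity ρ) (hpur : (ρ * ρ).trace.re * (Fintype.card k - 1) ≤ 1)
    {W : k → k → ℂ} (ht : 0 ≤ ∑ p, (W p p).re)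
    (hW : ∑ p, ∑ q, ‖W p q‖ ^ 2 ≤ (∑ p, (W p p).re) ^ 2) :
    0 ≤ (∑ p, ∑ q, W p q * ρ p q).re := by
  have hsq := sum_norm_sq_eq_re_trace_sq hρ.1.isHermitian
  set P := (ρ * ρ).trace.re
  have hP : 0 < P := by
    rw [← hsq]
    by_contra! hle
    have hz : ρ = 0 := by
      ext p q
      have h1 := (Finset.sum_eq_zero_iff_of_nonneg fun p _ => by positivity).1
        (hle.antisymm (by positivity)) p (Finset.mem_univ _)
      have h2 := (Finset.sum_eq_zero_iff_of_nonneg fun q _ => by positivity).1 h1 q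
        (Finset.mem_univ _)
      simpa using h2
    simpa [hz] using hρ.2
  set Δ : k → k → ℂ := fun p q => ρ p q - P * (1 : Matrix k k ℂ) p q with hΔ
  have htr : ∑ p, (ρ p p).re = 1 := by
    simpa [Matrix.trace] using congrArg Complex.re hρ.2
  have hΔsq : ∑ p, ∑ q, ‖Δ p q‖ ^ 2 ≤ P ^ 2 := by
    have h1 : ∀ p q, ‖Δ p q‖ ^ 2 = ‖ρ p q‖ ^ 2 +
        if p = q then P ^ 2 - 2 * P * (ρ p p).re else 0 := by
      intro p q
      by_cases hpq : p = q
      · subst hpq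
        simp only [hΔ, one_apply_eq, mul_one, if_true, ← Complex.normSq_eq_norm_sq,
          Complex.normSq_apply, Complex.sub_re, Complex.sub_im, Complex.ofReal_re,
          Complex.ofReal_im]
        ring
      · simp [hΔ, hpq]
    simp only [h1, Finset.sum_add_distrib, Finset.sum_ite_eq, Finset.mem_univ, if_true, hsq,
      Finset.sum_sub_distrib, ← Finset.mul_sum, htr, Finset.sum_const, Finset.card_univ,
      nsmul_eq_mul]
    nlinarith
  have hpair : (∑ p, ∑ q, W p q * Δ p q).re =
      (∑ p, ∑ q, W p q * ρ p q).re - P * ∑ p, (W p p).re := by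
    have h1 : ∑ p, ∑ q, W p q * Δ p q =
        ∑ p, ∑ q, W p q * ρ p q - P * ∑ p, W p p := by
      simp only [hΔ, mul_sub, Finset.sum_sub_distrib, Finset.mul_sum, one_apply, mul_ite, mul_one,
        mul_zero, Finset.sum_ite_eq, Finset.mem_univ, if_true, mul_comm]
    rw [h1, Complex.sub_re, Complex.re_ofReal_mul, Complex.re_sum Finset.univ fun p => W p p]
  have hcs : |(∑ p, ∑ q, W p q * Δ p q).re| ≤ P * ∑ p, (W p p).re := by
    refine (Complex.abs_re_le_norm _).trans ?_
    have h1 : ‖∑ p, ∑ q, W p q * Δ p q‖ ≤ ∑ x : k × k, ‖W x.1 x.2‖ * ‖Δ x.1 x.2‖ := by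
      rw [← Fintype.sum_prod_type' fun p q => W p q * Δ p q]
      exact (norm_sum_le _ _).trans_eq (by simp)
    refine h1.trans (abs_le_of_sq_le_sq' ?_ (by positivity)).2
    refine (Finset.sum_mul_sq_le_sq_mul_sq _ _ _).trans ?_
    rw [Fintype.sum_prod_type, Fintype.sum_prod_type, mul_pow, mul_comm]
    gcongr
  linarith [(abs_le.1 hcs).1]

end Pairing

lemma separableState_of_mem_convexHull {d₁ d₂ : ℕ}
    {ρ : Matrix (Fin d₁ × Fin d₂) (Fin d₁ × Fin d₂) ℂ}
    (h : (fun p q => ρ p q) ∈ convexHull ℝ (pureProductStates (Fin d₁) (Fin d₂))) :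
    SeparableState ρ := by
  obtain ⟨ι, _, w, z, hw, hw1, hz, hsum⟩ := mem_convexHull_iff_exists_fintype.1 h
  choose v hv hvz using hz
  let e := (Fintype.equivFin ι).symm
  refine ⟨Fintype.card ι, w ∘ e, fun i => (v (e i)).1, fun i => (v (e i)).2, fun i => hw _, ?_,
    fun i => (hv (e i)).1, fun i => (hv (e i)).2, ?_⟩
  · simpa [e.sum_comp w] using hw1
  · ext p q
    rw [Matrix.sum_apply, ← congrFun (congrFun hsum p) q, Finset.sum_apply, Finset.sum_apply,
      ← e.sum_comp]
    refine Finset.sum_congr rfl fun i _ => ?_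
    simp [← hvz, pureProduct, vecMulVec_apply, kroneckerMap_apply]

/-- If `tr(ρ²) ≤ 1/(d₁ d₂ − 1)`, then the bipartite density matrix `ρ` is separable. -/
theorem purity_ball_implies_separable {d₁ d₂ : ℕ} (hd₁ : 0 < d₁) (hd₂ : 0 < d₂)
    (ρ : Matrix (Fin d₁ × Fin d₂) (Fin d₁ × Fin d₂) ℂ) (hρ : IsDensity ρ)
    (hpur : ((ρ * ρ).trace).re ≤ 1 / ((d₁ : ℝ) * (d₂ : ℝ) - 1)) :
    SeparableState ρ := by
  have hpur' : (ρ * ρ).trace.re * (Fintype.card (Fin d₁ × Fin d₂) - 1) ≤ 1 := by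
    have hd : (0 : ℝ) ≤ (d₁ : ℝ) * d₂ - 1 := by
      have : 1 ≤ d₁ * d₂ := Nat.mul_pos hd₁ hd₂
      rw [sub_nonneg]
      exact_mod_cast this
    simp only [Fintype.card_prod, Fintype.card_fin, Nat.cast_mul]
    refine (mul_le_mul_of_nonneg_right hpur hd).trans ?_
    rw [one_div]
    exact inv_mul_le_one
  apply separableState_of_mem_convexHull
  by_contra hnot
  obtain ⟨f, u, hfρ, hfS⟩ := geometric_hahn_banach_point_closed (convex_convexHull ℝ _)
    (isCompact_pureProductStates _ _).convexHull_of_finiteDimensional.isClosed hnot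
  obtain ⟨F, hF, hfF⟩ := exists_hermitian_pairing f.toLinearMap
  let W : Fin d₁ × Fin d₂ → Fin d₁ × Fin d₂ → ℂ := fun p q => F p q - if p = q then (u : ℂ) else 0
  have hWF : ∀ X : Fin d₁ × Fin d₂ → Fin d₁ × Fin d₂ → ℂ, (∀ p q, X q p = star (X p q)) →
      ∑ p, X p p = 1 → (∑ p, ∑ q, W p q * X p q).re = f X - u := by
    intro X hX hX1
    have := hfF X hX
    simp only [ContinuousLinearMap.coe_coe] at this
    rw [this]
    simp only [W, sub_mul, ite_mul, zero_mul, Finset.sum_sub_distrib, Finset.sum_ite_eq,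
      Finset.mem_univ, if_true, ← Finset.mul_sum, hX1]
    simp
  have hW : ∀ p q, W q p = star (W p q) := by
    intro p q
    by_cases h : p = q
    · subst h
      simp only [W, star_sub, ← hF]
      simp
    · simp [W, h, Ne.symm h, hF p q]
  have hpos : IsBlockPositive W := isBlockPositive_of_unit fun x y hx hy => by
    rw [hWF _ (fun p q => star_pureProduct x y p q) (sum_pureProduct_diag hx hy)]
    exact sub_nonneg.2 (hfS _ (subset_convexHull ℝ _ ⟨(x, y), ⟨hx, hy⟩, rfl⟩)).le
  have key := re_sum_mul_nonneg_of_purity hρ hpur'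
    (sum_re_diag_nonneg_of_isBlockPositive hW hpos) (sum_norm_sq_le_of_isBlockPositive hW hpos)
  rw [hWF (fun p q => ρ p q) (fun p q => (hρ.1.isHermitian.apply q p).symm) hρ.2] at key
  linarith
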